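/- Let m ≥ 1, 0 < σ < 1, 1 ≤ p < ∞ and 0 < λ < 1, and let Q ⊂ ℝ^m be a rectangle (a product of m bounded intervals with nonempty interior); λQ denotes the rectangle with the same center as Q and side-lengths multiplied by λ. Then there is a constant C > 0, depending only on m, σ, p, λ and the ratio between the largest and the smallest side-length of Q, such that for every set Ω ⊂ ℝ^m with Q \ λQ ⊂ Ω and every measurable u : Ω → ℝ, |u|_{W^{σ,p}(Ω)} ≤ C ( |u|_{W^{σ,p}(Ω ∩ Q)} + |u|_{W^{σ,p}(Ω \ λQ)} ). -/

import Mathlib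

open MeasureTheory Set Metric
open scoped ENNReal
noncomputable section

/-- `ℝ^m` with the Euclidean norm. -/
abbrev Eucl (n : ℕ) : Type := EuclideanSpace ℝ (Fin n)

/-- The `p`-th power of the Gagliardo seminorm. -/
noncomputable def gagliardoPow (m : ℕ) (σ p : ℝ) (A : Set (Eucl m)) (u : Eucl m → ℝ) : ℝ≥0∞ :=
  ∫⁻ x in A, ∫⁻ y in A, (‖u x - u y‖₊ : ℝ≥0∞) ^ p / (‖x - y‖₊ : ℝ≥0∞) ^ ((m : ℝ) + σ * p)

/-- The Gagliardo seminorm `|u|_{W^{σ,p}(A)}`. -/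
noncomputable def gagliardoSeminorm (m : ℕ) (σ p : ℝ) (A : Set (Eucl m)) (u : Eucl m → ℝ) :
    ℝ≥0∞ :=
  gagliardoPow m σ p A u ^ (1 / p)

/-- The rectangle of center `c` and half side-lengths `t * r i`. -/
def rectangle (m : ℕ) (c : Eucl m) (r : Fin m → ℝ) (t : ℝ) : Set (Eucl m) :=
  {x : Eucl m | ∀ i, |x i - c i| < t * r i}

/-! Write `A = λQ`. The product `Ω × Ω` is covered by `(Ω ∩ Q)²`, `(Ω \ A)²` and the interactions
between `A` and `Ω \ Q`, so only the latter need a bound. For `x ∈ A` and `y ∉ Q` the difference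
`u x - u y` is routed through a point `z` of the layer `Q \ A ⊆ Ω` and averaged over the layer. With
`d` the distance from `A` to the complement of `Q`, both `|x - z|` and `|z - y|` are bounded by a
multiple of `|x - y| ≥ d`. Hence the `(z, y)` part is controlled by the energy on `Ω \ A`, and the
`(x, z)` part by the energy on `Ω ∩ Q` times the tail `∫_{|w| ≥ d} |w| ^ (-(m + σ p)) dw`, which
converges and scales as `d ^ (-σ p)`. Apart from `m`, `σ`, `p`, the constant involves only
the scale-invariant quantities `diam Q / d` and `|Q| / |Q \ A|`. -/

section DoubleIntegrals

variable {α : Type*} [MeasurableSpace α] {ν : Measure α} {G : α → α → ℝ≥0∞}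

lemma measure_mul_setLIntegral_le_of_le_mul_add [SFinite ν] {B S : Set α} {f g h : α → ℝ≥0∞}
    {M : ℝ≥0∞} (hB : MeasurableSet B) (hS : MeasurableSet S) (hg : Measurable g)
    (hh : Measurable h) (hG : Measurable G.uncurry)
    (hle : ∀ y ∈ B, ∀ z ∈ S, f y ≤ g z * h y + M * G y z) :
    ν S * ∫⁻ y in B, f y ∂ν ≤
      (∫⁻ z in S, g z ∂ν) * (∫⁻ y in B, h y ∂ν) + M * ∫⁻ y in B, ∫⁻ z in S, G y z ∂ν ∂ν :=
  calc ν S * ∫⁻ y in B, f y ∂ν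
      ≤ ∫⁻ y in B, ν S * f y ∂ν := lintegral_const_mul_le _ _
    _ ≤ ∫⁻ y in B, ((∫⁻ z in S, g z ∂ν) * h y + M * ∫⁻ z in S, G y z ∂ν) ∂ν := by
        refine setLIntegral_mono' hB fun y hy => ?_
        rw [mul_comm, ← setLIntegral_const, ← lintegral_mul_const _ hg,
          ← lintegral_const_mul _ hG.of_uncurry_left, ← lintegral_add_left (hg.mul_const _)]
        exact setLIntegral_mono' hS (hle y hy)
    _ = _ := by
        rw [lintegral_add_left (hh.const_mul _), lintegral_const_mul _ hh,
          lintegral_const_mul _ hG.lintegral_prod_right]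

lemma measure_mul_setLIntegral_setLIntegral_le_of_le_mul_add [SFinite ν] {A B S : Set α}
    {H : α → α → ℝ≥0∞} {M T : ℝ≥0∞} (hA : MeasurableSet A) (hB : MeasurableSet B)
    (hS : MeasurableSet S) (hG : Measurable G.uncurry) (hH : Measurable H.uncurry)
    (hle : ∀ x ∈ A, ∀ y ∈ B, ∀ z ∈ S, G x y ≤ G x z * H x y + M * G y z)
    (hT : ∀ x ∈ A, ∫⁻ y in B, H x y ∂ν ≤ T) :
    ν S * ∫⁻ x in A, ∫⁻ y in B, G x y ∂ν ∂ν ≤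
      T * (∫⁻ x in A, ∫⁻ z in S, G x z ∂ν ∂ν) + M * ν A * ∫⁻ y in B, ∫⁻ z in S, G y z ∂ν ∂ν :=
  calc ν S * ∫⁻ x in A, ∫⁻ y in B, G x y ∂ν ∂ν
      ≤ ∫⁻ x in A, ν S * ∫⁻ y in B, G x y ∂ν ∂ν := lintegral_const_mul_le _ _
    _ ≤ ∫⁻ x in A, (T * (∫⁻ z in S, G x z ∂ν) + M * ∫⁻ y in B, ∫⁻ z in S, G y z ∂ν ∂ν) ∂ν := by
        refine setLIntegral_mono' hA fun x hx =>
          (measure_mul_setLIntegral_le_of_le_mul_add hB hS hG.of_uncurry_left hH.of_uncurry_left hG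
            (hle x hx)).trans ?_
        rw [mul_comm T]
        gcongr
        exact hT x hx
    _ = _ := by
        rw [lintegral_add_right _ measurable_const, lintegral_const_mul _ hG.lintegral_prod_right,
          setLIntegral_const, mul_right_comm]

lemma lintegral_lintegral_le_add_two_mul_of_symm [SFinite ν] {A Q : Set α}
    (hG : Measurable G.uncurry) (hsymm : ∀ x y, G x y = G y x) (hAQ : A ⊆ Q) :
    ∫⁻ x, ∫⁻ y, G x y ∂ν ∂ν ≤
      (∫⁻ x in Q, ∫⁻ y in Q, G x y ∂ν ∂ν) + (∫⁻ x in Aᶜ, ∫⁻ y in Aᶜ, G x y ∂ν ∂ν)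
        + 2 * ∫⁻ x in A, ∫⁻ y in Qᶜ, G x y ∂ν ∂ν := by
  have on_prod (s t : Set α) :
      ∫⁻ x in s, ∫⁻ y in t, G x y ∂ν ∂ν = ∫⁻ z in s ×ˢ t, G.uncurry z ∂(ν.prod ν) :=
    (setLIntegral_prod _ hG.aemeasurable).symm
  have swap : ∫⁻ x in Qᶜ, ∫⁻ y in A, G x y ∂ν ∂ν = ∫⁻ x in A, ∫⁻ y in Qᶜ, G x y ∂ν ∂ν := by
    rw [lintegral_lintegral_swap hG.aemeasurable]
    simp only [hsymm]
  have cover : (univ : Set α) ×ˢ univ ⊆ (Q ×ˢ Q ∪ Aᶜ ×ˢ Aᶜ) ∪ (A ×ˢ Qᶜ ∪ Qᶜ ×ˢ A) := by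
    rintro ⟨x, y⟩ -
    have hx := @hAQ x
    have hy := @hAQ y
    simp only [mem_union, mem_prod, mem_compl_iff]
    tauto
  calc ∫⁻ x, ∫⁻ y, G x y ∂ν ∂ν
      = ∫⁻ z in univ ×ˢ univ, G.uncurry z ∂(ν.prod ν) := by simp only [← on_prod, setLIntegral_univ]
    _ ≤ (∫⁻ z in Q ×ˢ Q, G.uncurry z ∂(ν.prod ν) + ∫⁻ z in Aᶜ ×ˢ Aᶜ, G.uncurry z ∂(ν.prod ν))
        + (∫⁻ z in A ×ˢ Qᶜ, G.uncurry z ∂(ν.prod ν)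
          + ∫⁻ z in Qᶜ ×ˢ A, G.uncurry z ∂(ν.prod ν)) :=
        (lintegral_mono_set cover).trans <| (lintegral_union_le _ _ _).trans <|
          add_le_add (lintegral_union_le _ _ _) (lintegral_union_le _ _ _)
    _ = _ := by simp only [← on_prod, swap, two_mul]

end DoubleIntegrals

section Energy

variable {X F : Type*} [MetricSpace X] [PseudoEMetricSpace F] {p s : ℝ} {u : X → F}

/-- The integrand of the Gagliardo energy, for maps between metric spaces. The exponent `s` of the
kernel is `m + σ p` for the space `W^{σ,p}` of an `m`-dimensional domain. -/
def gagliardoDensity (p s : ℝ) (u : X → F) (x y : X) : ℝ≥0∞ :=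
  edist (u x) (u y) ^ p / edist x y ^ s

/-- The Gagliardo energy of `u` with respect to `ν`. The `p`-th power of the seminorm on `A` is the
case of a measure restricted to `A`. -/
def gagliardoEnergy [MeasurableSpace X] (p s : ℝ) (ν : Measure X) (u : X → F) : ℝ≥0∞ :=
  ∫⁻ x, ∫⁻ y, gagliardoDensity p s u x y ∂ν ∂ν

lemma gagliardoDensity_comm (x y : X) :
    gagliardoDensity p s u x y = gagliardoDensity p s u y x := by
  simp only [gagliardoDensity, edist_comm]

lemma gagliardoDensity_mul_edist_rpow (hp : 0 < p) (x y : X) :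
    gagliardoDensity p s u x y * edist x y ^ s = edist (u x) (u y) ^ p := by
  rcases eq_or_ne x y with rfl | hxy
  · simp [gagliardoDensity, hp]
  · refine ENNReal.div_mul_cancel ?_ ?_ <;> simp [ENNReal.rpow_eq_zero_iff, hxy, edist_ne_top]

lemma edist_rpow_div_le_mul_gagliardoDensity (hp : 0 < p) (hs : 0 ≤ s) {L : ℝ≥0∞} {x y z : X}
    (hL : edist x z ≤ L * edist x y) :
    edist (u z) (u y) ^ p / edist x y ^ s ≤ (1 + L) ^ s * gagliardoDensity p s u y z := by
  have edist_le : edist y z ≤ (1 + L) * edist x y :=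
    calc edist y z ≤ edist x y + edist x z := edist_triangle_left y z x
      _ ≤ (1 + L) * edist x y := by rw [add_mul, one_mul]; gcongr
  refine ENNReal.div_le_of_le_mul ?_
  calc edist (u z) (u y) ^ p
      = gagliardoDensity p s u y z * edist y z ^ s := by
        rw [edist_comm, gagliardoDensity_mul_edist_rpow hp]
    _ ≤ gagliardoDensity p s u y z * ((1 + L) * edist x y) ^ s := by gcongr
    _ = (1 + L) ^ s * gagliardoDensity p s u y z * edist x y ^ s := by
        rw [ENNReal.mul_rpow_of_nonneg _ _ hs]; ring

lemma gagliardoDensity_le_of_edist_le (hp : 1 ≤ p) (hs : 0 ≤ s) {L : ℝ≥0∞} {x y z : X}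
    (hL : edist x z ≤ L * edist x y) :
    gagliardoDensity p s u x y ≤
      2 ^ (p - 1) * (gagliardoDensity p s u x z * (edist x z ^ s * edist x y ^ (-s))
        + (1 + L) ^ s * gagliardoDensity p s u y z) := by
  have hp0 : 0 < p := zero_lt_one.trans_le hp
  have triangle : edist (u x) (u y) ^ p ≤
      2 ^ (p - 1) * (edist (u x) (u z) ^ p + edist (u z) (u y) ^ p) :=
    (ENNReal.rpow_le_rpow (edist_triangle _ _ _) hp0.le).trans
      (ENNReal.rpow_add_le_mul_rpow_add_rpow _ _ hp)
  calc gagliardoDensity p s u x y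
      ≤ 2 ^ (p - 1) * (edist (u x) (u z) ^ p + edist (u z) (u y) ^ p) / edist x y ^ s :=
        ENNReal.div_le_div_right triangle _
    _ = 2 ^ (p - 1) * (gagliardoDensity p s u x z * (edist x z ^ s * edist x y ^ (-s))
          + edist (u z) (u y) ^ p / edist x y ^ s) := by
        rw [mul_div_assoc, ENNReal.add_div, ← gagliardoDensity_mul_edist_rpow (s := s) hp0 x z,
          ENNReal.rpow_neg, div_eq_mul_inv, mul_assoc]
    _ ≤ _ := by gcongr; exact edist_rpow_div_le_mul_gagliardoDensity hp0 hs hL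

lemma setLIntegral_gagliardoDensity_le_gagliardoEnergy [MeasurableSpace X] {ν : Measure X}
    {B S D : Set X} (hB : B ⊆ D) (hS : S ⊆ D) :
    ∫⁻ x in B, ∫⁻ y in S, gagliardoDensity p s u x y ∂ν ∂ν ≤
      gagliardoEnergy p s (ν.restrict D) u :=
  (lintegral_mono_set hB).trans (lintegral_mono fun _ => lintegral_mono_set hS)

variable [MeasurableSpace X] [OpensMeasurableSpace X] [SecondCountableTopology X]

lemma measurable_uncurry_gagliardoDensity (hu : StronglyMeasurable u) :
    Measurable (gagliardoDensity p s u).uncurry :=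
  (((hu.comp_measurable measurable_fst).edist
    (hu.comp_measurable measurable_snd)).measurable.pow_const p).div (measurable_edist.pow_const s)

variable {ν : Measure X} [SFinite ν] {A Q : Set X}

lemma gagliardoEnergy_le_add_two_mul (hu : StronglyMeasurable u) (hAQ : A ⊆ Q) :
    gagliardoEnergy p s ν u ≤
      gagliardoEnergy p s (ν.restrict Q) u + gagliardoEnergy p s (ν.restrict Aᶜ) u
        + 2 * ∫⁻ x in A, ∫⁻ y in Qᶜ, gagliardoDensity p s u x y ∂ν ∂ν :=
  lintegral_lintegral_le_add_two_mul_of_symm (measurable_uncurry_gagliardoDensity hu)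
    gagliardoDensity_comm hAQ

lemma measure_sdiff_mul_setLIntegral_gagliardoDensity_le (hu : StronglyMeasurable u) (hp : 1 ≤ p)
    (hs : 0 ≤ s) (hA : MeasurableSet A) (hQ : MeasurableSet Q) (hAQ : A ⊆ Q) {d L T : ℝ≥0∞}
    (hsep : ∀ x ∈ A, ∀ y ∈ Qᶜ, d ≤ edist x y) (hdiam : ∀ x ∈ A, ∀ z ∈ Q \ A, edist x z ≤ L * d)
    (hT : ∀ x ∈ A, ∫⁻ y in Qᶜ, edist x y ^ (-s) ∂ν ≤ T) :
    ν (Q \ A) * ∫⁻ x in A, ∫⁻ y in Qᶜ, gagliardoDensity p s u x y ∂ν ∂ν ≤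
      2 ^ (p - 1) * ((L * d) ^ s * T * gagliardoEnergy p s (ν.restrict Q) u
        + (1 + L) ^ s * ν A * gagliardoEnergy p s (ν.restrict Aᶜ) u) := by
  have routed : ∀ x ∈ A, ∀ y ∈ Qᶜ, ∀ z ∈ Q \ A, gagliardoDensity p s u x y ≤
      gagliardoDensity p s u x z * (2 ^ (p - 1) * (L * d) ^ s * edist x y ^ (-s))
        + 2 ^ (p - 1) * (1 + L) ^ s * gagliardoDensity p s u y z := fun x hx y hy z hz =>
    calc gagliardoDensity p s u x y
        ≤ 2 ^ (p - 1) * (gagliardoDensity p s u x z * (edist x z ^ s * edist x y ^ (-s))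
            + (1 + L) ^ s * gagliardoDensity p s u y z) :=
          gagliardoDensity_le_of_edist_le hp hs
            ((hdiam x hx z hz).trans (by gcongr; exact hsep x hx y hy))
      _ ≤ 2 ^ (p - 1) * (gagliardoDensity p s u x z * ((L * d) ^ s * edist x y ^ (-s))
            + (1 + L) ^ s * gagliardoDensity p s u y z) := by
          gcongr
          exact hdiam x hx z hz
      _ = _ := by ring
  have tail (x : X) (hx : x ∈ A) :
      ∫⁻ y in Qᶜ, 2 ^ (p - 1) * (L * d) ^ s * edist x y ^ (-s) ∂ν ≤
        2 ^ (p - 1) * (L * d) ^ s * T := by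
    rw [lintegral_const_mul _ (by fun_prop)]
    gcongr
    exact hT x hx
  calc ν (Q \ A) * ∫⁻ x in A, ∫⁻ y in Qᶜ, gagliardoDensity p s u x y ∂ν ∂ν
      ≤ 2 ^ (p - 1) * (L * d) ^ s * T * (∫⁻ x in A, ∫⁻ z in Q \ A, gagliardoDensity p s u x z ∂ν ∂ν)
          + 2 ^ (p - 1) * (1 + L) ^ s * ν A *
            ∫⁻ y in Qᶜ, ∫⁻ z in Q \ A, gagliardoDensity p s u y z ∂ν ∂ν :=
        measure_mul_setLIntegral_setLIntegral_le_of_le_mul_add hA hQ.compl (hQ.diff hA)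
          (measurable_uncurry_gagliardoDensity hu)
          ((measurable_edist.pow_const (-s)).const_mul (2 ^ (p - 1) * (L * d) ^ s)) routed tail
    _ ≤ 2 ^ (p - 1) * (L * d) ^ s * T * gagliardoEnergy p s (ν.restrict Q) u
          + 2 ^ (p - 1) * (1 + L) ^ s * ν A * gagliardoEnergy p s (ν.restrict Aᶜ) u := by
        gcongr
        · exact setLIntegral_gagliardoDensity_le_gagliardoEnergy hAQ sdiff_subset
        · exact setLIntegral_gagliardoDensity_le_gagliardoEnergy (compl_subset_compl.2 hAQ)
            fun z hz => hz.2
    _ = _ := by ring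

end Energy

section Tail

open Module
open scoped NNReal

variable {E : Type*} [NormedAddCommGroup E] {s : ℝ}

lemma enorm_rpow_neg_le_of_one_le_enorm (hs : 0 ≤ s) {w : E} (hw : 1 ≤ ‖w‖ₑ) :
    ‖w‖ₑ ^ (-s) ≤ 2 ^ s * ENNReal.ofReal ((1 + ‖w‖) ^ (-s)) := by
  have half_le : (1 + ‖w‖ₑ) / 2 ≤ ‖w‖ₑ := by
    refine ENNReal.div_le_of_le_mul ?_
    rw [mul_two]
    gcongr
  rw [← ENNReal.ofReal_rpow_of_pos (by positivity), ENNReal.ofReal_add zero_le_one (norm_nonneg w),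
    ENNReal.ofReal_one, ofReal_norm]
  calc ‖w‖ₑ ^ (-s) = (‖w‖ₑ ^ s)⁻¹ := ENNReal.rpow_neg _ _
    _ ≤ (((1 + ‖w‖ₑ) / 2) ^ s)⁻¹ := by gcongr
    _ = 2 ^ s * (1 + ‖w‖ₑ) ^ (-s) := by
      rw [ENNReal.div_rpow_of_nonneg _ _ hs, ENNReal.inv_div (by simp) (by simp),
        div_eq_mul_inv, ENNReal.rpow_neg]

variable [MeasurableSpace E] {μ : Measure E}

/-- The integral of `‖w‖ ^ (-s)` outside the open unit ball. -/
def tailIntegral (μ : Measure E) (s : ℝ) : ℝ≥0∞ :=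
  ∫⁻ w in {w | 1 ≤ ‖w‖ₑ}, ‖w‖ₑ ^ (-s) ∂μ

variable [BorelSpace E]

lemma measurableSet_le_enorm (r : ℝ≥0∞) : MeasurableSet {w : E | r ≤ ‖w‖ₑ} :=
  measurableSet_le measurable_const measurable_enorm

variable [NormedSpace ℝ E] [FiniteDimensional ℝ E] [μ.IsAddHaarMeasure]

lemma tailIntegral_lt_top (hs : (finrank ℝ E : ℝ) < s) : tailIntegral μ s < ∞ := by
  have hs0 : 0 ≤ s := (Nat.cast_nonneg _).trans hs.le
  calc tailIntegral μ s
      ≤ ∫⁻ w in {w | 1 ≤ ‖w‖ₑ}, 2 ^ s * ENNReal.ofReal ((1 + ‖w‖) ^ (-s)) ∂μ :=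
        setLIntegral_mono' (measurableSet_le_enorm 1) fun _ hw =>
          enorm_rpow_neg_le_of_one_le_enorm hs0 hw
    _ ≤ ∫⁻ w, 2 ^ s * ENNReal.ofReal ((1 + ‖w‖) ^ (-s)) ∂μ := setLIntegral_le_lintegral _ _
    _ = 2 ^ s * ∫⁻ w, ENNReal.ofReal ((1 + ‖w‖) ^ (-s)) ∂μ := lintegral_const_mul _ (by fun_prop)
    _ < ∞ := ENNReal.mul_lt_top (ENNReal.rpow_lt_top_of_nonneg hs0 ENNReal.ofNat_ne_top)
        (finite_integral_one_add_norm hs)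

lemma setLIntegral_enorm_rpow_neg {d : ℝ≥0} (hd : d ≠ 0) :
    ∫⁻ w in {w | (d : ℝ≥0∞) ≤ ‖w‖ₑ}, ‖w‖ₑ ^ (-s) ∂μ =
      (d : ℝ≥0∞) ^ (finrank ℝ E - s) * tailIntegral μ s := by
  have hd0 : (d : ℝ≥0∞) ≠ 0 := by exact_mod_cast hd
  have enorm_rescale (w : E) : ‖(d : ℝ)⁻¹ • w‖ₑ = (d : ℝ≥0∞)⁻¹ * ‖w‖ₑ := by
    rw [enorm_smul, enorm_inv (by exact_mod_cast hd)]
    simp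
  have rescaled : ∫⁻ w in {w | (d : ℝ≥0∞) ≤ ‖w‖ₑ}, ‖(d : ℝ)⁻¹ • w‖ₑ ^ (-s) ∂μ =
      (d : ℝ≥0∞) ^ finrank ℝ E * tailIntegral μ s := by
    have preimage_eq : {w : E | (d : ℝ≥0∞) ≤ ‖w‖ₑ} = ((d : ℝ)⁻¹ • ·) ⁻¹' {w | 1 ≤ ‖w‖ₑ} := by
      ext w
      simp only [mem_preimage, mem_ofPred_eq, enorm_rescale]
      rw [mul_comm, ← div_eq_mul_inv, ENNReal.le_div_iff_mul_le (by simp [hd]) (by simp), one_mul]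
    rw [preimage_eq, ← setLIntegral_map (f := fun w => ‖w‖ₑ ^ (-s)) (measurableSet_le_enorm 1)
      (by fun_prop) (measurable_const_smul _), Measure.map_addHaar_smul _ (by simpa using hd),
      Measure.restrict_smul, lintegral_smul_measure, tailIntegral, smul_eq_mul, inv_pow, inv_inv,
      abs_of_nonneg (by positivity), ENNReal.ofReal_pow d.coe_nonneg, ENNReal.ofReal_coe_nnreal]
  calc ∫⁻ w in {w | (d : ℝ≥0∞) ≤ ‖w‖ₑ}, ‖w‖ₑ ^ (-s) ∂μ
      = ∫⁻ w in {w | (d : ℝ≥0∞) ≤ ‖w‖ₑ}, (d : ℝ≥0∞) ^ (-s) * ‖(d : ℝ)⁻¹ • w‖ₑ ^ (-s) ∂μ := by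
        refine lintegral_congr fun w => ?_
        rw [enorm_rescale, ← ENNReal.mul_rpow_of_ne_top ENNReal.coe_ne_top (by finiteness),
          ← mul_assoc, ENNReal.mul_inv_cancel hd0 ENNReal.coe_ne_top, one_mul]
    _ = (d : ℝ≥0∞) ^ (-s) * ((d : ℝ≥0∞) ^ finrank ℝ E * tailIntegral μ s) := by
        rw [lintegral_const_mul _ (by fun_prop), rescaled]
    _ = _ := by
        rw [← mul_assoc, ← ENNReal.rpow_natCast, ← ENNReal.rpow_add _ _ hd0 ENNReal.coe_ne_top,
          neg_add_eq_sub]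

lemma setLIntegral_edist_rpow_neg_le {d : ℝ≥0} (hd : d ≠ 0) {x : E} {B : Set E}
    (hB : MeasurableSet B) (hsep : ∀ y ∈ B, d ≤ edist x y) :
    ∫⁻ y in B, edist x y ^ (-s) ∂μ ≤ (d : ℝ≥0∞) ^ (finrank ℝ E - s) * tailIntegral μ s := by
  set g : E → ℝ≥0∞ := {w | (d : ℝ≥0∞) ≤ ‖w‖ₑ}.indicator fun w => ‖w‖ₑ ^ (-s) with hg
  calc ∫⁻ y in B, edist x y ^ (-s) ∂μ = ∫⁻ y in B, g (x - y) ∂μ := by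
        refine setLIntegral_congr_fun hB fun y hy => ?_
        have hy' : (d : ℝ≥0∞) ≤ ‖x - y‖ₑ := edist_eq_enorm_sub x y ▸ hsep y hy
        simp only [hg, indicator_of_mem (show x - y ∈ {w | (d : ℝ≥0∞) ≤ ‖w‖ₑ} from hy'),
          edist_eq_enorm_sub]
    _ ≤ ∫⁻ y, g (x - y) ∂μ := setLIntegral_le_lintegral _ _
    _ = ∫⁻ w, g w ∂μ := lintegral_sub_left_eq_self _ x
    _ = _ := by
        rw [lintegral_indicator (measurableSet_le_enorm _), setLIntegral_enorm_rpow_neg hd]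

end Tail

section NormedSpace

open Module
open scoped NNReal

variable {E F : Type*} [NormedAddCommGroup E] [NormedSpace ℝ E] [FiniteDimensional ℝ E]
  [MeasurableSpace E] [BorelSpace E] [PseudoEMetricSpace F] {μ ν : Measure E} {p s : ℝ}
  {θ L : ℝ≥0∞}

/-- The factor that bounds the interaction of a set `A` with the complement of a set `Q ⊇ A` by the
energies on `Q` and on `Aᶜ`. If `d` is a lower bound for the distance from `A` to `Qᶜ`, then `L * d`
bounds the diameter of `Q`, and `θ` times the measure of `Q \ A` bounds the measure of `A` as well
as `d` to the power of the dimension. -/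
def interactionConst (μ : Measure E) (p s : ℝ) (θ L : ℝ≥0∞) : ℝ≥0∞ :=
  2 ^ (p - 1) * θ * (L ^ s * tailIntegral μ s + (1 + L) ^ s)

variable [μ.IsAddHaarMeasure]

lemma interactionConst_ne_top (hp : 1 ≤ p) (hs : (finrank ℝ E : ℝ) < s) (hθ : θ ≠ ∞)
    (hL : L ≠ ∞) : interactionConst μ p s θ L ≠ ∞ := by
  have hs0 : 0 ≤ s := (Nat.cast_nonneg _).trans hs.le
  have h2 : (2 : ℝ≥0∞) ^ (p - 1) ≠ ∞ :=
    ENNReal.rpow_ne_top_of_nonneg (sub_nonneg.2 hp) ENNReal.ofNat_ne_top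
  have hLs : L ^ s * tailIntegral μ s ≠ ∞ :=
    ENNReal.mul_ne_top (ENNReal.rpow_ne_top_of_nonneg hs0 hL) (tailIntegral_lt_top hs).ne
  have h1L : (1 + L) ^ s ≠ ∞ :=
    ENNReal.rpow_ne_top_of_nonneg hs0 (ENNReal.add_ne_top.2 ⟨ENNReal.one_ne_top, hL⟩)
  exact ENNReal.mul_ne_top (ENNReal.mul_ne_top h2 hθ) (ENNReal.add_ne_top.2 ⟨hLs, h1L⟩)

variable [SFinite ν] {u : E → F} {A Q : Set E} {d : ℝ≥0}

lemma setLIntegral_gagliardoDensity_le_interactionConst_mul (hνμ : ν ≤ μ)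
    (hu : StronglyMeasurable u) (hp : 1 ≤ p) (hs : 0 ≤ s) (hA : MeasurableSet A)
    (hQ : MeasurableSet Q) (hAQ : A ⊆ Q) (hd : d ≠ 0)
    (hsep : ∀ x ∈ A, ∀ y ∈ Qᶜ, d ≤ edist x y) (hdiam : ∀ x ∈ A, ∀ z ∈ Q \ A, edist x z ≤ L * d)
    (hfin : ν (Q \ A) ≠ ∞) (hνA : ν A ≤ θ * ν (Q \ A))
    (hdν : (d : ℝ≥0∞) ^ finrank ℝ E ≤ θ * ν (Q \ A)) :
    ∫⁻ x in A, ∫⁻ y in Qᶜ, gagliardoDensity p s u x y ∂ν ∂ν ≤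
      interactionConst μ p s θ L *
        (gagliardoEnergy p s (ν.restrict Q) u + gagliardoEnergy p s (ν.restrict Aᶜ) u) := by
  have hd0 : (d : ℝ≥0∞) ≠ 0 := by exact_mod_cast hd
  have hpos : ν (Q \ A) ≠ 0 := fun h => pow_ne_zero (finrank ℝ E) hd0 (by simpa [h] using hdν)
  have tail (x : E) (hx : x ∈ A) :
      ∫⁻ y in Qᶜ, edist x y ^ (-s) ∂ν ≤ (d : ℝ≥0∞) ^ (finrank ℝ E - s) * tailIntegral μ s :=
    (lintegral_mono' (Measure.restrict_mono le_rfl hνμ) le_rfl).trans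
      (setLIntegral_edist_rpow_neg_le hd hQ.compl (hsep x hx))
  have scaling : (L * d) ^ s * ((d : ℝ≥0∞) ^ (finrank ℝ E - s) * tailIntegral μ s) =
      L ^ s * tailIntegral μ s * (d : ℝ≥0∞) ^ finrank ℝ E := by
    have : (d : ℝ≥0∞) ^ s * (d : ℝ≥0∞) ^ (finrank ℝ E - s) = (d : ℝ≥0∞) ^ finrank ℝ E := by
      rw [← ENNReal.rpow_add _ _ hd0 ENNReal.coe_ne_top, add_sub_cancel, ENNReal.rpow_natCast]
    rw [ENNReal.mul_rpow_of_nonneg _ _ hs, ← this]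
    ring
  set eQ := gagliardoEnergy p s (ν.restrict Q) u
  set eA := gagliardoEnergy p s (ν.restrict Aᶜ) u
  refine (ENNReal.mul_le_mul_iff_right hpos hfin).1 ?_
  calc ν (Q \ A) * ∫⁻ x in A, ∫⁻ y in Qᶜ, gagliardoDensity p s u x y ∂ν ∂ν
      ≤ 2 ^ (p - 1) * (L ^ s * tailIntegral μ s * (d : ℝ≥0∞) ^ finrank ℝ E * eQ
          + (1 + L) ^ s * ν A * eA) :=
        scaling ▸ measure_sdiff_mul_setLIntegral_gagliardoDensity_le hu hp hs hA hQ hAQ hsep hdiam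
          tail
    _ ≤ 2 ^ (p - 1) * (L ^ s * tailIntegral μ s * (θ * ν (Q \ A)) * (eQ + eA)
          + (1 + L) ^ s * (θ * ν (Q \ A)) * (eQ + eA)) := by
        gcongr
        exacts [le_self_add, le_add_self]
    _ = ν (Q \ A) * (interactionConst μ p s θ L * (eQ + eA)) := by
        rw [interactionConst]
        ring

theorem gagliardoEnergy_le_interactionConst_mul (hνμ : ν ≤ μ)
    (hu : StronglyMeasurable u) (hp : 1 ≤ p) (hs : 0 ≤ s) (hA : MeasurableSet A)
    (hQ : MeasurableSet Q) (hAQ : A ⊆ Q) (hd : d ≠ 0)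
    (hsep : ∀ x ∈ A, ∀ y ∈ Qᶜ, d ≤ edist x y) (hdiam : ∀ x ∈ A, ∀ z ∈ Q \ A, edist x z ≤ L * d)
    (hfin : ν (Q \ A) ≠ ∞) (hνA : ν A ≤ θ * ν (Q \ A))
    (hdν : (d : ℝ≥0∞) ^ finrank ℝ E ≤ θ * ν (Q \ A)) :
    gagliardoEnergy p s ν u ≤ (1 + 2 * interactionConst μ p s θ L) *
      (gagliardoEnergy p s (ν.restrict Q) u + gagliardoEnergy p s (ν.restrict Aᶜ) u) := by
  refine (gagliardoEnergy_le_add_two_mul hu hAQ).trans ?_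
  rw [add_mul, one_mul, mul_assoc]
  gcongr
  exact setLIntegral_gagliardoDensity_le_interactionConst_mul hνμ hu hp hs hA hQ hAQ hd hsep hdiam
    hfin hνA hdν

end NormedSpace

section Rectangle

variable {m : ℕ} {c : Eucl m} {r : Fin m → ℝ} {t t' : ℝ}

lemma rectangle_eq_preimage_pi_ball :
    rectangle m c r t = WithLp.ofLp ⁻¹' univ.pi fun i => ball (c i) (t * r i) := by
  ext x
  simp [rectangle, Real.dist_eq]

lemma measurableSet_rectangle : MeasurableSet (rectangle m c r t) := by
  rw [rectangle_eq_preimage_pi_ball]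
  exact (PiLp.volume_preserving_ofLp (Fin m)).measurable
    (MeasurableSet.univ_pi fun _ => measurableSet_ball)

lemma volume_rectangle : volume (rectangle m c r t) = ∏ i, ENNReal.ofReal (2 * (t * r i)) := by
  rw [rectangle_eq_preimage_pi_ball, (PiLp.volume_preserving_ofLp (Fin m)).measure_preimage
    (MeasurableSet.univ_pi fun _ => measurableSet_ball).nullMeasurableSet, volume_pi_pi]
  simp only [Real.volume_ball]

lemma volume_rectangle_ne_top : volume (rectangle m c r t) ≠ ∞ := by
  rw [volume_rectangle]
  exact ENNReal.prod_ne_top fun _ _ => ENNReal.ofReal_ne_top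

lemma volume_rectangle_eq_pow_mul (ht : 0 ≤ t) :
    volume (rectangle m c r t) = ENNReal.ofReal t ^ m * volume (rectangle m c r 1) := by
  simp only [volume_rectangle, one_mul, mul_left_comm (2 : ℝ) t, ENNReal.ofReal_mul ht,
    Finset.prod_mul_distrib, Finset.prod_const, Finset.card_univ, Fintype.card_fin]

lemma rectangle_subset_rectangle (hr : ∀ i, 0 ≤ r i) (htt' : t ≤ t') :
    rectangle m c r t ⊆ rectangle m c r t' :=
  fun _ hx i => (hx i).trans_le (mul_le_mul_of_nonneg_right htt' (hr i))

lemma volume_rectangle_sdiff (hr : ∀ i, 0 ≤ r i) (ht0 : 0 ≤ t) (ht1 : t ≤ 1) :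
    volume (rectangle m c r 1 \ rectangle m c r t) =
      (1 - ENNReal.ofReal t ^ m) * volume (rectangle m c r 1) := by
  rw [measure_sdiff (rectangle_subset_rectangle hr ht1) measurableSet_rectangle.nullMeasurableSet
    volume_rectangle_ne_top, volume_rectangle_eq_pow_mul ht0,
    ENNReal.sub_mul fun _ _ => volume_rectangle_ne_top, one_mul]

lemma one_sub_ofReal_pow_ne_zero (hm : m ≠ 0) (ht : t < 1) : 1 - ENNReal.ofReal t ^ m ≠ 0 :=
  (tsub_pos_of_lt (pow_lt_one₀ zero_le (ENNReal.ofReal_lt_one.2 ht) hm)).ne'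

lemma inv_mul_volume_rectangle_sdiff (hm : m ≠ 0) (hr : ∀ i, 0 ≤ r i) (ht0 : 0 ≤ t) (ht1 : t < 1) :
    (1 - ENNReal.ofReal t ^ m)⁻¹ * volume (rectangle m c r 1 \ rectangle m c r t) =
      volume (rectangle m c r 1) := by
  rw [volume_rectangle_sdiff hr ht0 ht1.le, ← mul_assoc,
    ENNReal.inv_mul_cancel (one_sub_ofReal_pow_ne_zero hm ht1) (by finiteness), one_mul]

lemma ofReal_pow_le_volume_rectangle {δ : ℝ} (hδ : ∀ i, δ ≤ 2 * (t * r i)) :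
    ENNReal.ofReal δ ^ m ≤ volume (rectangle m c r t) := by
  rw [volume_rectangle]
  calc ENNReal.ofReal δ ^ m = ∏ _i : Fin m, ENNReal.ofReal δ := by simp
    _ ≤ _ := Finset.prod_le_prod' fun i _ => ENNReal.ofReal_le_ofReal (hδ i)

lemma le_dist_of_mem_rectangle_of_notMem {δ : ℝ} (hδ : ∀ i, δ ≤ (t' - t) * r i) {x y : Eucl m}
    (hx : x ∈ rectangle m c r t) (hy : y ∉ rectangle m c r t') : δ ≤ dist x y := by
  obtain ⟨i, hi⟩ : ∃ i, t' * r i ≤ |y i - c i| := by simpa [rectangle] using hy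
  calc δ ≤ t' * r i - t * r i := by linarith [hδ i]
    _ ≤ |y i - c i| - |x i - c i| := sub_le_sub hi (hx i).le
    _ ≤ |x i - y i| := by
      rw [abs_sub_comm (x i) (y i), ← sub_sub_sub_cancel_right (y i) (x i) (c i)]
      exact abs_sub_abs_le_abs_sub _ _
    _ ≤ dist x y := by
      simpa [dist_eq_norm, Real.norm_eq_abs] using PiLp.norm_apply_le (x - y) i

lemma dist_le_of_mem_rectangle {ρ : ℝ} (hρ0 : 0 ≤ ρ) (hρ : ∀ i, t * r i ≤ ρ) {x z : Eucl m}
    (hx : x ∈ rectangle m c r t) (hz : z ∈ rectangle m c r t) :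
    dist x z ≤ √m * (2 * ρ) := by
  have coord (i : Fin m) : dist (x i) (z i) ≤ 2 * ρ :=
    calc dist (x i) (z i) ≤ dist (x i) (c i) + dist (z i) (c i) := dist_triangle_right _ _ _
      _ ≤ t * r i + t * r i := add_le_add (hx i).le (hz i).le
      _ ≤ 2 * ρ := by linarith [hρ i]
  calc dist x z = √(∑ i, dist (x i) (z i) ^ 2) := EuclideanSpace.dist_eq x z
    _ ≤ √(∑ _i : Fin m, (2 * ρ) ^ 2) := by
      gcongr with i
      exact coord i
    _ = √m * (2 * ρ) := by simp [Real.sqrt_sq, hρ0]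

end Rectangle

section Additivity

variable {m : ℕ} {p s lam : ℝ}

lemma gagliardoEnergy_restrict_le_of_rectangle_sdiff_subset {F : Type*} [PseudoEMetricSpace F]
    {R : ℝ} {c : Eucl m} {r : Fin m → ℝ} {Ω : Set (Eucl m)} (hm : m ≠ 0) (hs : 0 ≤ s) (hp : 1 ≤ p)
    (hlam0 : 0 ≤ lam) (hlam1 : lam < 1) (hr : ∀ i, 0 < r i) (hrR : ∀ i j, r i ≤ R * r j)
    (hΩ : rectangle m c r 1 \ rectangle m c r lam ⊆ Ω) {u : Eucl m → F}
    (hu : StronglyMeasurable u) :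
    gagliardoEnergy p s (volume.restrict Ω) u ≤
      (1 + 2 * interactionConst (volume : Measure (Eucl m)) p s (1 - ENNReal.ofReal lam ^ m)⁻¹
        (ENNReal.ofReal (√m * (2 * R) / (1 - lam)))) *
      (gagliardoEnergy p s (volume.restrict (Ω ∩ rectangle m c r 1)) u
        + gagliardoEnergy p s (volume.restrict (Ω \ rectangle m c r lam)) u) := by
  have : NeZero m := ⟨hm⟩
  obtain ⟨i₀, hmin⟩ := Finite.exists_min r
  have hlam : 0 < 1 - lam := sub_pos.2 hlam1
  have hd : 0 < (1 - lam) * r i₀ := mul_pos hlam (hr i₀)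
  have hr0 (i : Fin m) : 0 ≤ r i := (hr i).le
  have hAQ : rectangle m c r lam ⊆ rectangle m c r 1 := rectangle_subset_rectangle hr0 hlam1.le
  have hsep : ∀ x ∈ rectangle m c r lam, ∀ y ∈ (rectangle m c r 1)ᶜ,
      ENNReal.ofReal ((1 - lam) * r i₀) ≤ edist x y := fun x hx y hy => by
    rw [edist_dist]
    exact ENNReal.ofReal_le_ofReal <| le_dist_of_mem_rectangle_of_notMem
      (fun i => mul_le_mul_of_nonneg_left (hmin i) hlam.le) hx hy
  have hdiam : ∀ x ∈ rectangle m c r lam, ∀ z ∈ rectangle m c r 1 \ rectangle m c r lam,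
      edist x z ≤ ENNReal.ofReal (√m * (2 * R) / (1 - lam)) *
        ENNReal.ofReal ((1 - lam) * r i₀) := fun x hx z hz => by
    have hdist : dist x z ≤ √m * (2 * (R * r i₀)) :=
      dist_le_of_mem_rectangle ((hr0 i₀).trans (hrR i₀ i₀))
        (fun i => (one_mul (r i)).trans_le (hrR i i₀)) (hAQ hx) hz.1
    rw [edist_dist, ← ENNReal.ofReal_mul' hd.le]
    exact ENNReal.ofReal_le_ofReal (hdist.trans_eq (by field_simp))
  have layer : volume.restrict Ω (rectangle m c r 1 \ rectangle m c r lam) =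
      volume (rectangle m c r 1 \ rectangle m c r lam) := Measure.restrict_eq_self _ hΩ
  have layer_ne_top : volume (rectangle m c r 1 \ rectangle m c r lam) ≠ ∞ :=
    measure_ne_top_of_subset sdiff_subset volume_rectangle_ne_top
  rw [inter_comm, ← Measure.restrict_restrict measurableSet_rectangle, sdiff_eq, inter_comm Ω,
    ← Measure.restrict_restrict measurableSet_rectangle.compl]
  refine gagliardoEnergy_le_interactionConst_mul Measure.restrict_le_self hu hp hs
    measurableSet_rectangle measurableSet_rectangle hAQ (Real.toNNReal_pos.2 hd).ne' hsep hdiam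
    (layer ▸ layer_ne_top) ?_ ?_ <;>
  rw [layer, inv_mul_volume_rectangle_sdiff hm hr0 hlam0 hlam1]
  · exact (Measure.restrict_apply_le _ _).trans (measure_mono hAQ)
  · rw [finrank_euclideanSpace_fin]
    refine ofReal_pow_le_volume_rectangle fun i => ?_
    nlinarith [hmin i, hr i, hr i₀]

lemma rpow_one_div_le_mul_add (hp : 1 ≤ p) {C a b e : ℝ≥0∞} (h : e ≤ C * (a + b)) :
    e ^ (1 / p) ≤ C ^ (1 / p) * (a ^ (1 / p) + b ^ (1 / p)) := by
  have hp0 : 0 ≤ 1 / p := by positivity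
  calc e ^ (1 / p) ≤ C ^ (1 / p) * (a + b) ^ (1 / p) := by
        rw [← ENNReal.mul_rpow_of_nonneg _ _ hp0]
        gcongr
    _ ≤ _ := by
        gcongr
        exact ENNReal.rpow_add_le_add_rpow _ _ hp0 (by rwa [div_le_one (by positivity)])

lemma gagliardoSeminorm_eq_gagliardoEnergy_rpow {σ : ℝ} {A : Set (Eucl m)} {u : Eucl m → ℝ} :
    gagliardoSeminorm m σ p A u =
      gagliardoEnergy p (m + σ * p) (volume.restrict A) u ^ (1 / p) := by
  simp only [gagliardoSeminorm, gagliardoPow, gagliardoEnergy, gagliardoDensity,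
    edist_eq_enorm_sub, enorm_eq_nnnorm]

theorem gagliardo_finite_almost_additivity_general (hm : m ≠ 0) (hs : m < s) (hp : 1 ≤ p)
    (hlam0 : 0 ≤ lam) (hlam1 : lam < 1) (R : ℝ) :
    ∃ C : ℝ, 0 < C ∧
      ∀ (c : Eucl m) (r : Fin m → ℝ), (∀ i, 0 < r i) → (∀ i j, r i ≤ R * r j) →
        ∀ Ω : Set (Eucl m), rectangle m c r 1 \ rectangle m c r lam ⊆ Ω →
          ∀ {F : Type*} [PseudoEMetricSpace F] (u : Eucl m → F), StronglyMeasurable u →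
            gagliardoEnergy p s (volume.restrict Ω) u ^ (1 / p) ≤ ENNReal.ofReal C *
              (gagliardoEnergy p s (volume.restrict (Ω ∩ rectangle m c r 1)) u ^ (1 / p)
                + gagliardoEnergy p s (volume.restrict (Ω \ rectangle m c r lam)) u ^ (1 / p)) := by
  set C : ℝ≥0∞ := 1 + 2 * interactionConst (volume : Measure (Eucl m)) p s
    (1 - ENNReal.ofReal lam ^ m)⁻¹ (ENNReal.ofReal (√m * (2 * R) / (1 - lam)))
  have hC : C ≠ ∞ := ENNReal.add_ne_top.2 ⟨ENNReal.one_ne_top,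
    ENNReal.mul_ne_top ENNReal.ofNat_ne_top <| interactionConst_ne_top hp
      (by rwa [finrank_euclideanSpace_fin])
      (ENNReal.inv_ne_top.2 (one_sub_ofReal_pow_ne_zero hm hlam1)) ENNReal.ofReal_ne_top⟩
  have hC_rpow_pos : 0 < C ^ (1 / p) :=
    ENNReal.rpow_pos (zero_lt_one.trans_le le_self_add) hC
  have hC_rpow : C ^ (1 / p) ≠ ∞ := ENNReal.rpow_ne_top_of_nonneg (by positivity) hC
  refine ⟨(C ^ (1 / p)).toReal, ENNReal.toReal_pos hC_rpow_pos.ne' hC_rpow, ?_⟩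
  intro c r hr hrR Ω hΩ F _ u hu
  rw [ENNReal.ofReal_toReal hC_rpow]
  exact rpow_one_div_le_mul_add hp <|
    gagliardoEnergy_restrict_le_of_rectangle_sdiff_subset hm (m.cast_nonneg.trans hs.le) hp hlam0
      hlam1 hr hrR hΩ hu

end Additivity

/-- **Finite almost-additivity of the Gagliardo seminorm.**
Let `m ≥ 1`, `0 < σ < 1`, `1 ≤ p < ∞`, `0 < λ < 1`. For every bound `R ≥ 1` on the ratio
between the largest and the smallest side of a rectangle `Q`, there is `C > 0` depending only
on `m, σ, p, λ` and `R` such that for every rectangle `Q` with side ratios at most `R`, every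
`Ω ⊇ Q \ λQ` and every measurable `u : Ω → ℝ`,
`|u|_{W^{σ,p}(Ω)} ≤ C (|u|_{W^{σ,p}(Ω ∩ Q)} + |u|_{W^{σ,p}(Ω \ λQ)})`. -/
theorem gagliardo_finite_almost_additivity
    (m : ℕ) (hm : 1 ≤ m) (σ p lam : ℝ) (hσ0 : 0 < σ) (hσ1 : σ < 1) (hp : 1 ≤ p)
    (hlam0 : 0 < lam) (hlam1 : lam < 1) (R : ℝ) (hR : 1 ≤ R) :
    ∃ C : ℝ, 0 < C ∧
      ∀ (c : Eucl m) (r : Fin m → ℝ), (∀ i, 0 < r i) → (∀ i j, r i ≤ R * r j) →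
        ∀ Ω : Set (Eucl m), rectangle m c r 1 \ rectangle m c r lam ⊆ Ω →
          ∀ u : Eucl m → ℝ, Measurable u →
            gagliardoSeminorm m σ p Ω u ≤ ENNReal.ofReal C *
              (gagliardoSeminorm m σ p (Ω ∩ rectangle m c r 1) u
                + gagliardoSeminorm m σ p (Ω \ rectangle m c r lam) u) := by
  simp only [gagliardoSeminorm_eq_gagliardoEnergy_rpow]
  obtain ⟨C, hC, h⟩ := gagliardo_finite_almost_additivity_general (by lia)
    (lt_add_of_pos_right (m : ℝ) (mul_pos hσ0 (zero_lt_one.trans_le hp))) hp hlam0.le hlam1 R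
  exact ⟨C, hC, fun c r hr hrR Ω hΩ u hu => h c r hr hrR Ω hΩ u hu.stronglyMeasurable⟩
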